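/- arXiv:2410.22104 — 4 statements merged into one kernel-verified Lean document; each statement's English description precedes it below -/
import Mathlib

section
/- Fix β > -1 and n ∈ ℕ. Then the normalized Jacobi polynomials satisfy lim_{α→∞} p_n^{(α,β)}(cos 2θ) = (cos θ)^{2n} uniformly in θ ∈ [0, π/2]; that is, for every ε > 0 there exists A such that for all α > A and all θ ∈ [0, π/2], |p_n^{(α,β)}(cos 2θ) - (cos θ)^{2n}| < ε. -/
/-- The normalized Jacobi polynomial `p_n^{(α,β)}` evaluated at `cos 2θ`, via its
explicit expansion in powers of `cos²θ` and `sin²θ`. -/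
noncomputable def pJacobiCos (α β : ℝ) (n : ℕ) (θ : ℝ) : ℝ :=
  ∑ m ∈ Finset.range (n + 1),
    (-1 : ℝ) ^ (n - m) * (n.choose m) *
      (Real.Gamma (β + n + 1) / Real.Gamma (β + m + 1)) *
      (Real.Gamma (α + 1) / Real.Gamma (α + ((n : ℝ) - m) + 1)) *
      (Real.cos θ ^ 2) ^ m * (Real.sin θ ^ 2) ^ (n - m)

theorem gamma_lower (a : ℝ) (ha : 0 < a) (k : ℕ) :
    (a + 1) * Real.Gamma (a + 1) ≤ Real.Gamma (a + ((k : ℝ) + 1) + 1) := by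
  induction k with
  | zero =>
    have h := Real.Gamma_add_one (s := a + 1) (by positivity)
    simp only [Nat.cast_zero, zero_add]
    rw [h]
  | succ k ih =>
    have h := Real.Gamma_add_one (s := a + ((k : ℝ) + 1) + 1) (by positivity)
    have e : a + (((k + 1 : ℕ) : ℝ) + 1) + 1 = a + ((k : ℝ) + 1) + 1 + 1 := by
      push_cast; ring
    rw [e, h]
    have hp : 0 < Real.Gamma (a + ((k : ℝ) + 1) + 1) := Real.Gamma_pos_of_pos (by positivity)
    have hk : (0 : ℝ) ≤ k := Nat.cast_nonneg k
    nlinarith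

theorem gamma_ratio (a : ℝ) (ha : 0 < a) (n m : ℕ) (h : m < n) :
    |Real.Gamma (a + 1) / Real.Gamma (a + ((n : ℝ) - m) + 1)| ≤ 1 / (a + 1) := by
  obtain ⟨k, rfl⟩ := Nat.exists_eq_add_of_lt h
  have e : a + (((m + k + 1 : ℕ) : ℝ) - m) + 1 = a + ((k : ℝ) + 1) + 1 := by
    push_cast; ring
  rw [e]
  have h1 : 0 < Real.Gamma (a + 1) := Real.Gamma_pos_of_pos (by positivity)
  have h2 : 0 < Real.Gamma (a + ((k : ℝ) + 1) + 1) := Real.Gamma_pos_of_pos (by positivity)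
  rw [abs_of_pos (div_pos h1 h2), div_le_div_iff₀ h2 (by positivity)]
  linarith [gamma_lower a ha k]

theorem jacobi_uniform_limit (β : ℝ) (hβ : -1 < β) (n : ℕ) :
    ∀ ε : ℝ, 0 < ε → ∃ A : ℝ, ∀ α : ℝ, A < α →
      ∀ θ ∈ Set.Icc (0 : ℝ) (Real.pi / 2),
        |pJacobiCos α β n θ - Real.cos θ ^ (2 * n)| < ε := by
  intro ε hε
  set C : ℝ := ∑ m ∈ Finset.range n,
    |(n.choose m : ℝ) * (Real.Gamma (β + n + 1) / Real.Gamma (β + m + 1))| with hC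
  have hC0 : 0 ≤ C := Finset.sum_nonneg fun _ _ => abs_nonneg _
  refine ⟨C / ε, fun α hα θ _ => ?_⟩
  have hα0 : 0 < α := lt_of_le_of_lt (by positivity) hα
  have hg1 : Real.Gamma (β + n + 1) ≠ 0 :=
    (Real.Gamma_pos_of_pos (by have : (0 : ℝ) ≤ n := Nat.cast_nonneg n
                               linarith)).ne'
  have hg2 : Real.Gamma (α + 1) ≠ 0 := (Real.Gamma_pos_of_pos (by positivity)).ne'
  have key : pJacobiCos α β n θ - Real.cos θ ^ (2 * n) = ∑ m ∈ Finset.range n,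
    (-1 : ℝ) ^ (n - m) * (n.choose m) *
      (Real.Gamma (β + n + 1) / Real.Gamma (β + m + 1)) *
      (Real.Gamma (α + 1) / Real.Gamma (α + ((n : ℝ) - m) + 1)) *
      (Real.cos θ ^ 2) ^ m * (Real.sin θ ^ 2) ^ (n - m) := by
    unfold pJacobiCos
    rw [Finset.sum_range_succ]
    simp [div_self hg1, div_self hg2, pow_mul]
  rw [key]
  calc _ ≤ ∑ m ∈ Finset.range n,
      |(n.choose m : ℝ) * (Real.Gamma (β + n + 1) / Real.Gamma (β + m + 1))| * (1 / (α + 1)) := by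
        refine (Finset.abs_sum_le_sum_abs _ _).trans (Finset.sum_le_sum fun m hm => ?_)
        have hr := gamma_ratio α hα0 n m (Finset.mem_range.mp hm)
        have hc : |(Real.cos θ ^ 2) ^ m| ≤ 1 := by
          rw [abs_of_nonneg (by positivity)]
          exact pow_le_one₀ (by positivity) (Real.cos_sq_le_one θ)
        have hs : |(Real.sin θ ^ 2) ^ (n - m)| ≤ 1 := by
          rw [abs_of_nonneg (by positivity)]
          exact pow_le_one₀ (by positivity) (Real.sin_sq_le_one θ)
        have h1 : |(-1 : ℝ) ^ (n - m)| = 1 := by simp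
        rw [abs_mul, abs_mul, abs_mul, mul_assoc ((-1 : ℝ) ^ (n - m)), abs_mul ((-1 : ℝ) ^ (n - m)),
          h1, one_mul]
        refine (mul_le_of_le_one_right (by positivity) hs).trans ?_
        refine (mul_le_of_le_one_right (by positivity) hc).trans ?_
        exact mul_le_mul_of_nonneg_left hr (abs_nonneg _)
    _ = C / (α + 1) := by rw [← Finset.sum_mul, ← hC]; ring
    _ < ε := by
        rw [div_lt_iff₀ (by positivity)]
        rw [div_lt_iff₀ hε] at hα
        nlinarith
end

section
/- Let β ≥ 0 or β = -1/2, let α > β, n ≥ 1, and 0 < θ₀ ≤ π/2. Then for every θ with θ₀ ≤ θ ≤ π/2, the normalized Jacobi polynomial satisfies |p_n^{(α,β)}(cos 2θ)| ≤ Γ(α+1) / (Γ(β+1) (n sin²θ₀)^{α-β}). -/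
open Polynomial in
/-- Action of the Jacobi differential operator on the Bernstein-type basis. -/
lemma jac_basis (α β : ℝ) (k j : ℕ) (x : ℝ) :
    x * (1 - x) * (derivative (derivative ((X : ℝ[X]) ^ k * (1 - X) ^ j))).eval x
      + ((α + 1) - (α + β + 2) * x) * (derivative ((X : ℝ[X]) ^ k * (1 - X) ^ j)).eval x
      + ((k : ℝ) + j) * ((k : ℝ) + j + α + β + 1) * ((X : ℝ[X]) ^ k * (1 - X) ^ j).eval x
    = k * (k + α) * (x ^ (k - 1) * (1 - x) ^ j)
      + j * (j + β) * (x ^ k * (1 - x) ^ (j - 1)) := by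
  rcases k with _ | _ | k <;> rcases j with _ | _ | j <;>
    simp [derivative_mul, derivative_pow] <;> ring

/-- Coefficients. -/
noncomputable def jacA (α β : ℝ) (n k : ℕ) : ℝ :=
  (-1 : ℝ) ^ k * (n.choose k) *
    (Real.Gamma (β + n + 1) / Real.Gamma (β + ((n : ℝ) - k) + 1)) *
    (Real.Gamma (α + 1) / Real.Gamma (α + k + 1))

open Polynomial in
/-- The Jacobi polynomial in the variable `x = sin² θ`. -/
noncomputable def jacP (α β : ℝ) (n : ℕ) : ℝ[X] :=
  ∑ k ∈ Finset.range (n + 1), C (jacA α β n k) * (X ^ k * (1 - X) ^ (n - k))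

lemma jacP_eval (α β : ℝ) (n : ℕ) (x : ℝ) : (jacP α β n).eval x =
    ∑ k ∈ Finset.range (n + 1), jacA α β n k * (x ^ k * (1 - x) ^ (n - k)) := by
  simp [jacP, Polynomial.eval_finsetSum]

lemma pJ_eq (α β : ℝ) (n : ℕ) (θ : ℝ) :
    pJacobiCos α β n θ = (jacP α β n).eval (Real.sin θ ^ 2) := by
  rw [jacP_eval, pJacobiCos, ← Finset.sum_range_reflect]
  refine Finset.sum_congr rfl fun k hk => ?_
  have hk' : k ≤ n := by simpa [Nat.lt_succ_iff] using hk
  have e1 : n + 1 - 1 - k = n - k := by omega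
  have e2 : n - (n - k) = k := by omega
  rw [e1, e2, Nat.choose_symm hk', Nat.cast_sub hk', jacA, ← Real.cos_sq' θ]
  rw [show (n : ℝ) - (n - k) = k by ring]
  ring

lemma jacA_succ (α β : ℝ) (hα : -1 < α) (hβ : -1 < β) (n k : ℕ) (hk : k < n) :
    jacA α β n (k + 1) * ((k + 1 : ℕ) * ((k + 1 : ℕ) + α)) =
      - (jacA α β n k * (((n : ℝ) - k) * ((n : ℝ) - k + β))) := by
  have hkn : (k : ℝ) + 1 ≤ n := by exact_mod_cast hk
  have hk0 : (0 : ℝ) ≤ k := Nat.cast_nonneg k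
  have g1 : Real.Gamma (α + ((k + 1 : ℕ) : ℝ) + 1) = (α + k + 1) * Real.Gamma (α + k + 1) := by
    rw [← Real.Gamma_add_one (by linarith)]; push_cast; congr 1; ring
  have g2 : Real.Gamma (β + ((n : ℝ) - k) + 1) = (β + (n - k)) *
      Real.Gamma (β + ((n : ℝ) - (k + 1 : ℕ)) + 1) := by
    rw [show β + ((n : ℝ) - (k + 1 : ℕ)) + 1 = β + (n - k) by push_cast; ring]
    rw [← Real.Gamma_add_one (by linarith)]
  have c : (n.choose (k + 1) : ℝ) * (k + 1 : ℕ) = n.choose k * ((n : ℝ) - k) := by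
    have := Nat.choose_succ_right_eq n k
    rw [← Nat.cast_sub hk.le]; exact_mod_cast this
  have p1 : 0 < Real.Gamma (α + k + 1) := Real.Gamma_pos_of_pos (by linarith)
  have p2 : 0 < Real.Gamma (β + ((n : ℝ) - (k + 1 : ℕ)) + 1) :=
    Real.Gamma_pos_of_pos (by push_cast; linarith)
  have q1 : α + k + 1 ≠ 0 := by linarith
  have q2 : β + (n - k) ≠ 0 := by linarith
  unfold jacA
  rw [g1, g2]
  generalize Real.Gamma (β + ((n : ℝ) - (k + 1 : ℕ)) + 1) = G at *
  generalize Real.Gamma (α + k + 1) = H at *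
  calc _ = (-1 : ℝ) ^ (k + 1) * ((n.choose (k + 1) : ℝ) * (k + 1 : ℕ)) *
        (Real.Gamma (β + n + 1) / G) * (Real.Gamma (α + 1) / ((α + k + 1) * H)) *
          ((k + 1 : ℕ) + α) := by ring
    _ = _ := by
      rw [c]
      push_cast
      have p1' := p1.ne'
      have p2' := p2.ne'
      field_simp
      ring

open Polynomial in
lemma jac_ode (α β : ℝ) (hα : -1 < α) (hβ : -1 < β) (n : ℕ) (x : ℝ) :
    x * (1 - x) * (derivative (derivative (jacP α β n))).eval x
      + ((α + 1) - (α + β + 2) * x) * (derivative (jacP α β n)).eval x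
      + (n : ℝ) * (n + α + β + 1) * (jacP α β n).eval x = 0 := by
  have h1 : ∀ k ∈ Finset.range (n + 1), 
      jacA α β n k * (x * (1 - x) * (derivative (derivative ((X : ℝ[X]) ^ k * (1 - X) ^ (n - k)))).eval x
      + ((α + 1) - (α + β + 2) * x) * (derivative ((X : ℝ[X]) ^ k * (1 - X) ^ (n - k))).eval x
      + (n : ℝ) * (n + α + β + 1) * ((X : ℝ[X]) ^ k * (1 - X) ^ (n - k)).eval x)
      = jacA α β n k * (k * (k + α) * (x ^ (k - 1) * (1 - x) ^ (n - k))) +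
       jacA α β n k * (((n : ℝ) - k) * (((n : ℝ) - k) + β) * (x ^ k * (1 - x) ^ (n - k - 1))) := by
    intro k hk
    have hk' : k ≤ n := by simpa [Nat.lt_succ_iff] using hk
    have := jac_basis α β k (n - k) x
    rw [Nat.cast_sub hk', show (k : ℝ) + (n - k) = n by ring] at this
    rw [this]; ring
  have h3 : ∑ k ∈ Finset.range n, jacA α β n (k + 1) * (((k + 1 : ℕ) : ℝ) * (((k + 1 : ℕ) : ℝ) + α) *
        (x ^ (k + 1 - 1) * (1 - x) ^ (n - (k + 1)))) +
      ∑ k ∈ Finset.range n, jacA α β n k *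
        (((n : ℝ) - k) * (((n : ℝ) - k) + β) * (x ^ k * (1 - x) ^ (n - k - 1))) = 0 := by
    rw [← Finset.sum_add_distrib]
    refine Finset.sum_eq_zero fun k hk => ?_
    have := jacA_succ α β hα hβ n k (by simpa using hk)
    rw [show n - (k + 1) = n - k - 1 by omega, show k + 1 - 1 = k by omega]
    linear_combination (x ^ k * (1 - x) ^ (n - k - 1)) * this
  have h4 : x * (1 - x) * (derivative (derivative (jacP α β n))).eval x
      + ((α + 1) - (α + β + 2) * x) * (derivative (jacP α β n)).eval x
      + (n : ℝ) * (n + α + β + 1) * (jacP α β n).eval x = 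
      ∑ k ∈ Finset.range (n + 1), jacA α β n k * (x * (1 - x) * (derivative (derivative ((X : ℝ[X]) ^ k * (1 - X) ^ (n - k)))).eval x
      + ((α + 1) - (α + β + 2) * x) * (derivative ((X : ℝ[X]) ^ k * (1 - X) ^ (n - k))).eval x
      + (n : ℝ) * (n + α + β + 1) * ((X : ℝ[X]) ^ k * (1 - X) ^ (n - k)).eval x) := by
    simp only [jacP, derivative_sum, derivative_C_mul, eval_finsetSum, eval_C_mul, Finset.mul_sum,
      ← Finset.sum_add_distrib]
    refine Finset.sum_congr rfl fun k hk => ?_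
    ring
  rw [h4, Finset.sum_congr rfl h1, Finset.sum_add_distrib, Finset.sum_range_succ',
    Finset.sum_range_succ (n := n)]
  simp only [Nat.cast_zero, sub_self, zero_mul, mul_zero, add_zero]
  exact h3

open Polynomial in
/-- Sonin-type argument in the symmetric case. -/
lemma sonin_sym (P : ℝ[X]) (β K : ℝ) (hβ : 0 ≤ β) (hK : 0 < K)
    (ode : ∀ x : ℝ, x * (1 - x) * (derivative (derivative P)).eval x
      + ((β + 1) - (β + β + 2) * x) * (derivative P).eval x + K * P.eval x = 0)
    (x : ℝ) (hx : 0 ≤ x) (hx' : x ≤ 1 / 2) : P.eval x ^ 2 ≤ P.eval 0 ^ 2 := by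
  let h : ℝ → ℝ := fun y => P.eval y ^ 2 + y * (1 - y) * (derivative P).eval y ^ 2 / K
  have hd : ∀ y, HasDerivAt h (-((2 * β + 1) * (1 - 2 * y) * (derivative P).eval y ^ 2 / K)) y := by
    intro y
    have d1 := (P.hasDerivAt y).pow 2
    have d2 := ((derivative P).hasDerivAt y).pow 2
    have d3 := ((hasDerivAt_id y).mul ((hasDerivAt_id y).const_sub 1))
    have := d1.add ((d3.mul d2).div_const K)
    refine this.congr_deriv ?_
    simp
    field_simp
    linear_combination (2 * (derivative P).eval y) * ode y
  have hanti : AntitoneOn h (Set.Icc 0 (1 / 2)) := by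
    apply antitoneOn_of_deriv_nonpos (convex_Icc _ _)
    · exact fun y _ => (hd y).continuousAt.continuousWithinAt
    · exact fun y _ => (hd y).differentiableAt.differentiableWithinAt
    · intro y hy
      rw [interior_Icc] at hy
      rw [(hd y).deriv]
      have : 0 ≤ 1 - 2 * y := by linarith [hy.2]
      have : 0 ≤ (2 * β + 1) * (1 - 2 * y) * (derivative P).eval y ^ 2 / K := by positivity
      linarith
  have := hanti (a := 0) (b := x) ⟨le_rfl, by norm_num⟩ ⟨hx, hx'⟩ hx
  have h0 : 0 ≤ x * (1 - x) * (derivative P).eval x ^ 2 / K := by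
    have : 0 ≤ 1 - x := by linarith
    positivity
  simp only [h] at this
  simp at this
  linarith

open Polynomial in
/-- Sonin-type argument for `β = -1/2`. -/
lemma sonin_half (P : ℝ[X]) (l K : ℝ) (hl : 0 < l) (hK : 0 < K)
    (ode : ∀ x : ℝ, x * (1 - x) * (derivative (derivative P)).eval x
      + ((l + 1 / 2) - (l + 1) * x) * (derivative P).eval x + K * P.eval x = 0)
    (x : ℝ) (hx : 0 < x) (hx' : x ≤ 1) : (x ^ l * P.eval x) ^ 2 ≤ P.eval 1 ^ 2 := by
  let g : ℝ → ℝ := fun y => P.eval y ^ 2 +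
    (1 - y) * (y * (derivative P).eval y + l * P.eval y) ^ 2 / (K * y + l / 2)
  let h : ℝ → ℝ := fun y => y ^ (2 * l) * g y
  have hd : ∀ y, 0 < y → HasDerivAt h (y ^ (2 * l - 1) *
      ((1 - y) * (y * (derivative P).eval y + l * P.eval y) ^ 2 / (K * y + l / 2) *
        (2 * l + (l / 2) / (K * y + l / 2)))) y := by
    intro y hy
    have hD : K * y + l / 2 ≠ 0 := by positivity
    have d1 := (P.hasDerivAt y).pow 2
    have d2 := (((hasDerivAt_id y).mul ((derivative P).hasDerivAt y)).add
      ((P.hasDerivAt y).const_mul l)).pow 2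
    have d3 := ((hasDerivAt_id y).const_sub 1)
    have d4 := ((hasDerivAt_id y).const_mul K).add_const (l / 2)
    have d5 := Real.hasDerivAt_rpow_const (p := 2 * l) (Or.inl hy.ne')
    have := d5.mul (d1.add ((d3.mul d2).div d4 hD))
    refine this.congr_deriv ?_
    have e : y ^ (2 * l) = y ^ (2 * l - 1) * y := by
      rw [Real.rpow_sub_one hy.ne']; field_simp
    simp
    rw [e]
    generalize y ^ (2 * l - 1) = R
    have o := ode y
    generalize (derivative (derivative P)).eval y = P2 at *
    generalize (derivative P).eval y = P1 at *
    generalize P.eval y = P0 at *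
    have o2 : (1 - y) * (y * (y * P2 + P1 + l * P1)) = (y * P1 + l * P0) / 2 - (K * y + l / 2) * P0 := by
      linear_combination y * o
    generalize hDD : K * y + l / 2 = D at *
    have hK' : K * y = D - l / 2 := by linarith
    rw [eq_comm]
    field_simp
    linear_combination (-4 * R * (y * P1 + l * P0) * D) * o2 +
      2 * R * (1 - y) * (y * P1 + l * P0) ^ 2 * hK'
  have hmono : MonotoneOn h (Set.Icc x 1) := by
    apply monotoneOn_of_deriv_nonneg (convex_Icc _ _)
    · exact fun y hy => (hd y (hx.trans_le hy.1)).continuousAt.continuousWithinAt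
    · intro y hy
      rw [interior_Icc] at hy
      exact (hd y (hx.trans hy.1)).differentiableAt.differentiableWithinAt
    · intro y hy
      rw [interior_Icc] at hy
      have hy0 := hx.trans hy.1
      rw [(hd y hy0).deriv]
      have : 0 ≤ 1 - y := by linarith [hy.2]
      positivity
  have := hmono (a := x) (b := 1) ⟨le_rfl, hx'⟩ ⟨hx', le_rfl⟩ hx'
  have h0 : 0 ≤ x ^ (2 * l) * ((1 - x) * (x * (derivative P).eval x + l * P.eval x) ^ 2 / (K * x + l / 2)) := by
    have : 0 ≤ 1 - x := by linarith
    positivity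
  have e : (x ^ l) ^ 2 = x ^ (2 * l) := by
    rw [← Real.rpow_natCast, ← Real.rpow_mul hx.le]; congr 1; push_cast; ring
  simp only [h, g] at this
  simp at this
  rw [mul_pow, e]
  linarith

lemma gamma_slope (x s : ℝ) (hx : 0 < x) (hs : 0 < s) :
    Real.Gamma (x + 1) * x ^ s ≤ Real.Gamma (x + 1 + s) := by
  have h := Real.convexOn_log_Gamma.slope_mono_adjacent (x := x) (y := x + 1) (z := x + 1 + s)
    (by simpa using hx) (by simp only [Set.mem_Ioi]; linarith) (by linarith) (by linarith)
  have g0 := Real.Gamma_pos_of_pos hx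
  have g1 : 0 < Real.Gamma (x + 1) := Real.Gamma_pos_of_pos (by linarith)
  have g2 : 0 < Real.Gamma (x + 1 + s) := Real.Gamma_pos_of_pos (by linarith)
  simp only [Function.comp, add_sub_cancel_left, div_one] at h
  rw [le_div_iff₀ hs] at h
  have e : Real.log (Real.Gamma (x + 1)) = Real.log x + Real.log (Real.Gamma x) := by
    rw [Real.Gamma_add_one hx.ne', Real.log_mul hx.ne' g0.ne']
  rw [← Real.log_le_log_iff (by positivity) g2, Real.log_mul g1.ne' (by positivity),
    Real.log_rpow hx]
  have : Real.log (Real.Gamma (x + 1)) - Real.log (Real.Gamma x) = Real.log x := by linarith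
  rw [this] at h
  linarith

/-- The ratio used for the half-integer Gamma inequality. -/
noncomputable def gR (l : ℝ) (n : ℕ) : ℝ :=
  Real.Gamma (n + 1 / 2 + l) / (Real.Gamma (n + 1 / 2) * (n : ℝ) ^ l)

lemma gR_step (l : ℝ) (hl : 0 < l) (n : ℕ) (hn : 1 ≤ n) : gR l (n + 1) ≤ gR l n := by
  have hn0 : (0 : ℝ) < n := by exact_mod_cast hn
  have g1 : 0 < Real.Gamma ((n : ℝ) + 1 / 2) := Real.Gamma_pos_of_pos (by linarith)
  have g2 : 0 < Real.Gamma ((n : ℝ) + 1 / 2 + l) := Real.Gamma_pos_of_pos (by linarith)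
  have e1 : Real.Gamma (((n + 1 : ℕ) : ℝ) + 1 / 2) = (n + 1 / 2) * Real.Gamma (n + 1 / 2) := by
    rw [← Real.Gamma_add_one (by linarith)]; congr 1; push_cast; ring
  have e2 : Real.Gamma (((n + 1 : ℕ) : ℝ) + 1 / 2 + l) =
      (n + 1 / 2 + l) * Real.Gamma (n + 1 / 2 + l) := by
    rw [← Real.Gamma_add_one (by linarith)]; congr 1; push_cast; ring
  have e3 : ((n + 1 : ℕ) : ℝ) ^ l = (1 + 1 / (n : ℝ)) ^ l * (n : ℝ) ^ l := by
    rw [← Real.mul_rpow (by positivity) hn0.le]; congr 1; push_cast; field_simp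
  have key : 1 + l / (n + 1 / 2) ≤ (1 + 1 / (n : ℝ)) ^ l := by
    have hlog := Real.le_log_one_add_of_nonneg (x := 1 / (n : ℝ)) (by positivity)
    have : 2 * (1 / (n : ℝ)) / (1 / (n : ℝ) + 2) = 1 / (n + 1 / 2) := by field_simp; ring
    rw [this] at hlog
    rw [Real.rpow_def_of_pos (by positivity)]
    have h2 := Real.add_one_le_exp (Real.log (1 + 1 / (n : ℝ)) * l)
    have h3 : l / (n + 1 / 2) ≤ Real.log (1 + 1 / (n : ℝ)) * l := by
      calc l / (n + 1 / 2) = 1 / (n + 1 / 2) * l := by ring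
        _ ≤ _ := by gcongr
    linarith
  unfold gR
  rw [e1, e2, e3]
  have hr : (0 : ℝ) < (n : ℝ) ^ l := by positivity
  have hq : 0 < (1 + 1 / (n : ℝ)) ^ l := by positivity
  rw [div_le_div_iff₀ (by positivity) (by positivity)]
  have : (n : ℝ) + 1 / 2 + l ≤ (n + 1 / 2) * (1 + 1 / (n : ℝ)) ^ l := by
    calc (n : ℝ) + 1 / 2 + l = (n + 1 / 2) * (1 + l / (n + 1 / 2)) := by field_simp
      _ ≤ _ := by gcongr
  calc _ = ((n : ℝ) + 1 / 2 + l) * (Real.Gamma (n + 1 / 2 + l) * (Real.Gamma (n + 1 / 2) * (n : ℝ) ^ l)) := by ring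
    _ ≤ ((n + 1 / 2) * (1 + 1 / (n : ℝ)) ^ l) *
      (Real.Gamma (n + 1 / 2 + l) * (Real.Gamma (n + 1 / 2) * (n : ℝ) ^ l)) := by gcongr
    _ = _ := by ring

lemma gamma_half (l : ℝ) (hl : 0 < l) (n : ℕ) (hn : 1 ≤ n) :
    Real.Gamma (n + 1 / 2) * (n : ℝ) ^ l ≤ Real.Gamma (n + 1 / 2 + l) := by
  have hn0 : (0 : ℝ) < n := by exact_mod_cast hn
  have hmono : ∀ j, gR l (n + j) ≤ gR l n := by
    intro j
    induction j with
    | zero => exact le_rfl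
    | succ j ih => exact (gR_step l hl (n + j) (by omega)).trans ih
  have hlow : ∀ N : ℕ, 1 ≤ N → (1 - 1 / 2 * (1 / (N : ℝ))) ^ l ≤ gR l N := by
    intro N hN
    have hN0 : (1 : ℝ) ≤ N := by exact_mod_cast hN
    have h := gamma_slope (N - 1 / 2) l (by linarith) hl
    rw [show (N : ℝ) - 1 / 2 + 1 = N + 1 / 2 by ring] at h
    have g1 : 0 < Real.Gamma ((N : ℝ) + 1 / 2) := Real.Gamma_pos_of_pos (by linarith)
    unfold gR
    rw [le_div_iff₀ (by positivity)]
    refine le_trans (le_of_eq ?_) h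
    have hnn : 0 ≤ 1 - 1 / 2 * (1 / (N : ℝ)) := by
      have : 1 / (N : ℝ) ≤ 1 := by rw [div_le_one (by linarith)]; exact hN0
      linarith
    rw [show (N : ℝ) - 1 / 2 = (1 - 1 / 2 * (1 / (N : ℝ))) * N by field_simp,
      Real.mul_rpow hnn (by linarith)]
    ring
  have hlim : Filter.Tendsto (fun N : ℕ => (1 - 1 / 2 * (1 / (N : ℝ))) ^ l) Filter.atTop
      (nhds 1) := by
    have h1 : Filter.Tendsto (fun N : ℕ => (1 - 1 / 2 * (1 / (N : ℝ)))) Filter.atTop (nhds 1) := by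
      have h0 := ((tendsto_one_div_atTop_nhds_zero_nat (𝕜 := ℝ)).const_mul (1 / 2)).const_sub 1
      rwa [mul_zero, sub_zero] at h0
    simpa using h1.rpow_const (p := l) (Or.inr hl.le)
  have hfin : 1 ≤ gR l n := by
    refine le_of_tendsto hlim ?_
    filter_upwards [Filter.eventually_ge_atTop n] with N hN
    obtain ⟨j, rfl⟩ := Nat.exists_eq_add_of_le hN
    exact (hlow _ (by omega)).trans (hmono j)
  have g1 : 0 < Real.Gamma ((n : ℝ) + 1 / 2) := Real.Gamma_pos_of_pos (by linarith)
  unfold gR at hfin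
  rwa [le_div_iff₀ (by positivity), one_mul] at hfin

lemma jacP_zero (α β : ℝ) (hα : -1 < α) (hβ : -1 < β) (n : ℕ) : (jacP α β n).eval 0 = 1 := by
  have hn0 : (0 : ℝ) ≤ n := Nat.cast_nonneg n
  have g1 : 0 < Real.Gamma (β + n + 1) := Real.Gamma_pos_of_pos (by linarith)
  have g2 : 0 < Real.Gamma (α + 1) := Real.Gamma_pos_of_pos (by linarith)
  rw [jacP_eval, Finset.sum_range_succ']
  simp [jacA, g1.ne', g2.ne']

lemma jacP_one (α β : ℝ) (n : ℕ) : (jacP α β n).eval 1 = jacA α β n n := by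
  rw [jacP_eval, Finset.sum_range_succ, Finset.sum_eq_zero]
  · simp
  · intro k hk
    have : n - k ≠ 0 := by have := Finset.mem_range.1 hk; omega
    simp [this]

lemma case_half (α : ℝ) (hα : -(1 / 2) < α) (n : ℕ) (hn : 1 ≤ n) (x : ℝ) (hx : 0 < x)
    (hx' : x ≤ 1) : |(jacP α (-(1 / 2)) n).eval x| ≤
      Real.Gamma (α + 1) / (Real.Gamma (-(1 / 2) + 1) * ((n : ℝ) * x) ^ (α - -(1 / 2))) := by
  have hn0 : (0 : ℝ) < n := by exact_mod_cast hn
  have hl : 0 < α + 1 / 2 := by linarith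
  have hs := sonin_half (jacP α (-(1 / 2)) n) (α + 1 / 2) (n * (n + α + 1 / 2)) hl
    (mul_pos hn0 (by linarith))
    (fun y => by
      have := jac_ode α (-(1 / 2)) (by linarith) (by norm_num) n y
      linear_combination this) x hx hx'
  rw [jacP_one] at hs
  have hs' := (sq_le_sq.1 hs)
  have hxl : 0 < x ^ (α + 1 / 2) := by positivity
  have hnl : 0 < (n : ℝ) ^ (α + 1 / 2) := by positivity
  rw [abs_mul, abs_of_pos hxl] at hs'
  have g0 : 0 < Real.Gamma (-(1 / 2) + 1) := Real.Gamma_pos_of_pos (by norm_num)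
  have g1 : 0 < Real.Gamma ((n : ℝ) + 1 / 2) := Real.Gamma_pos_of_pos (by linarith)
  have g2 : 0 < Real.Gamma (α + 1) := Real.Gamma_pos_of_pos (by linarith)
  have g3 : 0 < Real.Gamma (α + n + 1) := Real.Gamma_pos_of_pos (by linarith)
  have hA : |jacA α (-(1 / 2)) n n| = Real.Gamma (n + 1 / 2) / Real.Gamma (-(1 / 2) + 1) *
      (Real.Gamma (α + 1) / Real.Gamma (α + n + 1)) := by
    unfold jacA
    rw [abs_mul, abs_mul, abs_mul]
    simp only [abs_pow, abs_neg, abs_one, one_pow, Nat.choose_self, Nat.cast_one, one_mul,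
      sub_self, add_zero]
    rw [show -(1 / 2 : ℝ) + n + 1 = n + 1 / 2 by ring, abs_of_pos (by positivity),
      abs_of_pos (by positivity)]
  have hG := gamma_half (α + 1 / 2) hl n hn
  rw [show (n : ℝ) + 1 / 2 + (α + 1 / 2) = α + n + 1 by ring] at hG
  rw [show α - -(1 / 2) = α + 1 / 2 by ring, Real.mul_rpow hn0.le hx.le,
    le_div_iff₀ (by positivity)]
  calc _ = (x ^ (α + 1 / 2) * |(jacP α (-(1 / 2)) n).eval x|) *
        (Real.Gamma (-(1 / 2) + 1) * (n : ℝ) ^ (α + 1 / 2)) := by ring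
    _ ≤ |jacA α (-(1 / 2)) n n| * (Real.Gamma (-(1 / 2) + 1) * (n : ℝ) ^ (α + 1 / 2)) := by
      gcongr
    _ = (Real.Gamma (n + 1 / 2) * (n : ℝ) ^ (α + 1 / 2)) / Real.Gamma (α + n + 1) *
        Real.Gamma (α + 1) := by
      rw [hA]; field_simp
    _ ≤ 1 * Real.Gamma (α + 1) := by
      gcongr
      rw [div_le_one g3]; exact hG
    _ = _ := one_mul _

lemma jacP_symm (β : ℝ) (n : ℕ) (y : ℝ) :
    |(jacP β β n).eval (1 - y)| = |(jacP β β n).eval y| := by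
  have : (jacP β β n).eval (1 - y) = (-1) ^ n * (jacP β β n).eval y := by
    rw [jacP_eval, jacP_eval, ← Finset.sum_range_reflect, Finset.mul_sum]
    refine Finset.sum_congr rfl fun k hk => ?_
    have hk' : k ≤ n := by simpa [Nat.lt_succ_iff] using hk
    have e1 : n + 1 - 1 - k = n - k := by omega
    have e2 : n - (n - k) = k := by omega
    have e3 : (-1 : ℝ) ^ (n - k) = (-1) ^ n * (-1) ^ k := by
      obtain ⟨j, rfl⟩ := Nat.exists_eq_add_of_le hk'
      rw [Nat.add_sub_cancel_left, pow_add]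
      have : (-1 : ℝ) ^ k * (-1) ^ k = 1 := by rw [← mul_pow]; simp
      linear_combination (-(-1 : ℝ) ^ j) * this
    rw [e1, e2, jacA, jacA, Nat.choose_symm hk', Nat.cast_sub hk', e3,
      show (n : ℝ) - (n - k) = k by ring]
    ring
  rw [this, abs_mul]; simp

lemma jacP_sym_le (β : ℝ) (hβ : 0 ≤ β) (n : ℕ) (hn : 1 ≤ n) (y : ℝ) (h0 : 0 ≤ y) (h1 : y ≤ 1) :
    |(jacP β β n).eval y| ≤ 1 := by
  have hn0 : (0 : ℝ) < n := by exact_mod_cast hn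
  have key : ∀ z : ℝ, 0 ≤ z → z ≤ 1 / 2 → |(jacP β β n).eval z| ≤ 1 := by
    intro z hz hz'
    have := sonin_sym (jacP β β n) β (n * (n + β + β + 1)) hβ (by positivity)
      (fun y => jac_ode β β (by linarith) (by linarith) n y) z hz hz'
    rw [jacP_zero β β (by linarith) (by linarith)] at this
    simpa using (sq_le_sq.1 this)
  rcases le_total y (1 / 2) with h | h
  · exact key y h0 h
  · rw [← jacP_symm]; exact key _ (by linarith) (by linarith)

lemma hom_bound (β : ℝ) (hβ : 0 ≤ β) (n : ℕ) (hn : 1 ≤ n) (x w : ℝ) (hx : 0 ≤ x) (hx' : x ≤ 1)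
    (hw : 0 < w) (hw' : w ≤ 1) :
    |∑ k ∈ Finset.range (n + 1), jacA β β n k * ((w * x) ^ k * (1 - x) ^ (n - k))| ≤
      (1 - (1 - w) * x) ^ n := by
  have hD : 0 < 1 - (1 - w) * x := by nlinarith
  set D := 1 - (1 - w) * x with hDdef
  have e : ∑ k ∈ Finset.range (n + 1), jacA β β n k * ((w * x) ^ k * (1 - x) ^ (n - k)) =
      D ^ n * (jacP β β n).eval (w * x / D) := by
    rw [jacP_eval, Finset.mul_sum]
    refine Finset.sum_congr rfl fun k hk => ?_
    have hk' : k ≤ n := by simpa [Nat.lt_succ_iff] using hk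
    have e1 : 1 - w * x / D = (1 - x) / D := by field_simp; rw [hDdef]; ring
    rw [e1, div_pow, div_pow]
    have e2 : D ^ n = D ^ k * D ^ (n - k) := by rw [← pow_add]; congr 1; omega
    rw [e2]
    field_simp
  rw [e, abs_mul, abs_of_pos (by positivity)]
  have := jacP_sym_le β hβ n hn (w * x / D) (by positivity)
    (by rw [div_le_one hD]; rw [hDdef]; linarith)
  exact mul_le_of_le_one_right (by positivity) this

open MeasureTheory in
lemma beta_int (u v : ℝ) (hu : 0 < u) (hv : 0 < v) :
    IntervalIntegrable (fun w : ℝ => w ^ (u - 1) * (1 - w) ^ (v - 1)) volume 0 1 ∧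
    ∫ w in (0 : ℝ)..1, w ^ (u - 1) * (1 - w) ^ (v - 1) =
      Real.Gamma u * Real.Gamma v / Real.Gamma (u + v) := by
  have hc := Complex.betaIntegral_convergent (u := (u : ℂ)) (v := (v : ℂ)) (by simpa) (by simpa)
  have heq : ∀ w ∈ Set.uIcc (0 : ℝ) 1, ((w : ℂ) ^ ((u : ℂ) - 1) * (1 - (w : ℂ)) ^ ((v : ℂ) - 1)) =
      ((w ^ (u - 1) * (1 - w) ^ (v - 1) : ℝ) : ℂ) := by
    intro w hw
    rw [Set.uIcc_of_le zero_le_one] at hw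
    rw [Complex.ofReal_mul, Complex.ofReal_cpow hw.1, Complex.ofReal_cpow (by linarith [hw.2])]
    push_cast
    rfl
  have hb : Complex.betaIntegral u v = ((∫ w in (0 : ℝ)..1, w ^ (u - 1) * (1 - w) ^ (v - 1) : ℝ) : ℂ) := by
    unfold Complex.betaIntegral
    rw [← intervalIntegral.integral_ofReal]
    exact intervalIntegral.integral_congr heq
  constructor
  · rw [intervalIntegrable_iff_integrableOn_Ioc_of_le zero_le_one] at hc ⊢
    have := hc.re
    refine IntegrableOn.congr_fun this ?_ measurableSet_Ioc
    intro w hw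
    have h := heq w (by rw [Set.uIcc_of_le zero_le_one]; exact ⟨hw.1.le, hw.2⟩)
    simp only [RCLike.re_to_complex]
    rw [h, Complex.ofReal_re]
  · have := ProbabilityTheory.beta_eq_betaIntegralReal u v hu hv
    rw [hb, Complex.ofReal_re] at this
    rw [← this, ProbabilityTheory.beta]

open MeasureTheory in
lemma exp_int (a r : ℝ) (ha : 0 < a) (hr : 0 < r) :
    IntervalIntegrable (fun w : ℝ => (1 - w) ^ (a - 1) * Real.exp (-(r * (1 - w)))) volume 0 1 ∧
    ∫ w in (0 : ℝ)..1, (1 - w) ^ (a - 1) * Real.exp (-(r * (1 - w))) ≤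
      Real.Gamma a / r ^ a := by
  have hi : IntegrableOn (fun t : ℝ => t ^ (a - 1) * Real.exp (-(r * t))) (Set.Ioi 0) := by
    have := integrableOn_rpow_mul_exp_neg_mul_rpow (p := 1) (s := a - 1) (b := r)
      (by linarith) one_pos hr
    simpa using this
  have hi2 : IntegrableOn (fun t : ℝ => t ^ (a - 1) * Real.exp (-(r * t))) (Set.Ioc 0 1) :=
    hi.mono_set Set.Ioc_subset_Ioi_self
  constructor
  · have h := ((intervalIntegrable_iff_integrableOn_Ioc_of_le zero_le_one).2 hi2).comp_sub_left 1
    simpa using h.symm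
  · have h := intervalIntegral.integral_comp_sub_left (a := 0) (b := 1)
      (fun t : ℝ => t ^ (a - 1) * Real.exp (-(r * t))) 1
    rw [h]
    simp only [sub_self, sub_zero]
    rw [intervalIntegral.integral_of_le zero_le_one]
    refine (setIntegral_mono_set hi ?_ (Set.Ioc_subset_Ioi_self.eventuallyLE)).trans ?_
    · filter_upwards [ae_restrict_mem measurableSet_Ioi] with t ht
      have : (0 : ℝ) < t := ht
      simp only [Pi.zero_apply]
      positivity
    · rw [Real.integral_rpow_mul_exp_neg_mul_Ioi ha hr, one_div, Real.inv_rpow hr.le]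
      apply le_of_eq; ring

open MeasureTheory in
lemma case_pos (α β : ℝ) (hβ : 0 ≤ β) (hαβ : β < α) (n : ℕ) (hn : 1 ≤ n) (x : ℝ) (hx : 0 < x)
    (hx' : x ≤ 1) : |(jacP α β n).eval x| ≤
      Real.Gamma (α + 1) / (Real.Gamma (β + 1) * ((n : ℝ) * x) ^ (α - β)) := by
  have hn0 : (0 : ℝ) < n := by exact_mod_cast hn
  obtain ⟨a, rfl⟩ : ∃ a, α = β + a := ⟨α - β, by ring⟩
  have ha : 0 < a := by linarith
  rw [add_sub_cancel_left]
  have g1 : 0 < Real.Gamma a := Real.Gamma_pos_of_pos ha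
  have g2 : 0 < Real.Gamma (β + 1) := Real.Gamma_pos_of_pos (by linarith)
  have g3 : 0 < Real.Gamma (β + a + 1) := Real.Gamma_pos_of_pos (by linarith)
  let H : ℝ → ℝ := fun w =>
    ∑ k ∈ Finset.range (n + 1), jacA β β n k * ((w * x) ^ k * (1 - x) ^ (n - k))
  have hrep : (jacP (β + a) β n).eval x = Real.Gamma (β + a + 1) / (Real.Gamma a * Real.Gamma (β + 1)) *
      ∫ w in (0 : ℝ)..1, H w * (w ^ β * (1 - w) ^ (a - 1)) := by
    have hcongr : ∫ w in (0 : ℝ)..1, H w * (w ^ β * (1 - w) ^ (a - 1)) =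
        ∫ w in (0 : ℝ)..1, ∑ k ∈ Finset.range (n + 1), (jacA β β n k * (x ^ k * (1 - x) ^ (n - k))) *
          (w ^ ((β + k + 1) - 1) * (1 - w) ^ (a - 1)) := by
      rw [intervalIntegral.integral_of_le zero_le_one, intervalIntegral.integral_of_le zero_le_one]
      refine setIntegral_congr_fun measurableSet_Ioc fun w hw => ?_
      simp only [H, Finset.sum_mul]
      refine Finset.sum_congr rfl fun k _ => ?_
      rw [add_sub_cancel_right, Real.rpow_add hw.1, Real.rpow_natCast, mul_pow]
      ring
    rw [hcongr, intervalIntegral.integral_finsetSum]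
    · rw [jacP_eval, Finset.mul_sum]
      refine Finset.sum_congr rfl fun k _ => ?_
      have hk0 : (0 : ℝ) ≤ k := Nat.cast_nonneg k
      rw [intervalIntegral.integral_const_mul, (beta_int (β + k + 1) a (by linarith) ha).2]
      have g4 : 0 < Real.Gamma (β + k + 1) := Real.Gamma_pos_of_pos (by linarith)
      rw [show β + k + 1 + a = β + a + k + 1 by ring]
      unfold jacA
      field_simp
    · intro k _
      have hk0 : (0 : ℝ) ≤ k := Nat.cast_nonneg k
      exact ((beta_int (β + k + 1) a (by linarith) ha).1).const_mul _
  have hE := exp_int a (n * x) ha (by positivity)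
  have hbd : |∫ w in (0 : ℝ)..1, H w * (w ^ β * (1 - w) ^ (a - 1))| ≤
      ∫ w in (0 : ℝ)..1, (1 - w) ^ (a - 1) * Real.exp (-(n * x * (1 - w))) := by
    rw [← Real.norm_eq_abs]
    refine intervalIntegral.norm_integral_le_of_norm_le zero_le_one ?_ hE.1
    refine Filter.Eventually.of_forall fun w hw => ?_
    have hw1 : 0 ≤ 1 - w := by linarith [hw.2]
    have hw0 := hw.1
    have hH := hom_bound β hβ n hn x w hx.le hx' hw.1 hw.2
    have hD : 0 ≤ 1 - (1 - w) * x := by nlinarith [hw.2]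
    have hexp : (1 - (1 - w) * x) ^ n ≤ Real.exp (-(n * x * (1 - w))) := by
      rw [show -(n * x * (1 - w)) = (n : ℝ) * (-((1 - w) * x)) by ring, Real.exp_nat_mul]
      gcongr
      have := Real.add_one_le_exp (-((1 - w) * x))
      linarith
    have hwb : w ^ β ≤ 1 := Real.rpow_le_one hw0.le hw.2 hβ
    rw [norm_mul, norm_mul, Real.norm_eq_abs, Real.norm_eq_abs, Real.norm_eq_abs,
      abs_of_nonneg (Real.rpow_nonneg hw0.le _), abs_of_nonneg (Real.rpow_nonneg hw1 _)]
    calc |H w| * (w ^ β * (1 - w) ^ (a - 1)) 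
        ≤ Real.exp (-(n * x * (1 - w))) * (1 * (1 - w) ^ (a - 1)) := by
          have := Real.rpow_nonneg hw1 (a - 1)
          have h2 := hH.trans hexp
          have := Real.rpow_nonneg hw0.le β
          gcongr
      _ = _ := by ring
  rw [hrep, abs_mul, abs_of_pos (by positivity)]
  calc _ ≤ Real.Gamma (β + a + 1) / (Real.Gamma a * Real.Gamma (β + 1)) *
        (Real.Gamma a / (n * x) ^ a) := by
        gcongr
        exact hbd.trans hE.2
    _ = _ := by
      have : 0 < ((n : ℝ) * x) ^ a := by positivity
      field_simp

theorem jacobi_bound_one (α β : ℝ) (hβ : 0 ≤ β ∨ β = -(1/2)) (hαβ : β < α)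
    (n : ℕ) (hn : 1 ≤ n) (θ₀ : ℝ) (hθ₀ : 0 < θ₀) (hθ₀' : θ₀ ≤ Real.pi / 2) :
    ∀ θ ∈ Set.Icc θ₀ (Real.pi / 2),
      |pJacobiCos α β n θ| ≤
        Real.Gamma (α + 1) /
          (Real.Gamma (β + 1) * ((n : ℝ) * Real.sin θ₀ ^ 2) ^ (α - β)) := by
  intro θ hθ
  have hn0 : (0 : ℝ) < n := by exact_mod_cast hn
  have hπ := Real.pi_pos
  have hs0 : 0 < Real.sin θ₀ := Real.sin_pos_of_pos_of_lt_pi hθ₀ (by linarith)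
  have hs : Real.sin θ₀ ≤ Real.sin θ :=
    Real.sin_le_sin_of_le_of_le_pi_div_two (by linarith) hθ.2 hθ.1
  have hsq : Real.sin θ₀ ^ 2 ≤ Real.sin θ ^ 2 := by gcongr
  have hpos : 0 < Real.sin θ ^ 2 := by have := hs0.trans_le hs; positivity
  have hβ1 : -1 < β := by rcases hβ with h | h <;> linarith
  have g1 : 0 < Real.Gamma (β + 1) := Real.Gamma_pos_of_pos (by linarith)
  have g2 : 0 < Real.Gamma (α + 1) := Real.Gamma_pos_of_pos (by linarith)
  have hab : 0 ≤ α - β := by linarith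
  have main : |pJacobiCos α β n θ| ≤ Real.Gamma (α + 1) /
      (Real.Gamma (β + 1) * ((n : ℝ) * Real.sin θ ^ 2) ^ (α - β)) := by
    rw [pJ_eq]
    rcases hβ with h | h
    · exact case_pos α β h hαβ n hn _ hpos (Real.sin_sq_le_one θ)
    · subst h
      exact case_half α hαβ n hn _ hpos (Real.sin_sq_le_one θ)
  refine main.trans ?_
  gcongr
end

section
/- Let β ≥ 0 or β = -1/2, let n ≥ 1, and 0 < θ₀ < π/2, and suppose α satisfies n·tan²θ₀ < α - β - 1. Then for every θ with θ₀ ≤ θ ≤ π/2, the normalized Jacobi polynomial satisfies |p_n^{(α,β)}(cos 2θ)| ≤ (Γ(α+1)/Γ(α-β)) · (cos θ₀)^{2n} / (α - β - 1 - n·tan²θ₀)^{β+1}. -/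
def mon0 (i k : ℕ) (v : ℝ) : ℝ := v ^ i * (1 - v) ^ k
def mon1 (i k : ℕ) (v : ℝ) : ℝ := i * v ^ (i-1) * (1 - v) ^ k - k * v ^ i * (1-v)^(k-1)
def mon2 (i k : ℕ) (v : ℝ) : ℝ := i * mon1 (i-1) k v - k * mon1 i (k-1) v

lemma mon0_deriv (i k : ℕ) (v : ℝ) : HasDerivAt (mon0 i k) (mon1 i k v) v := by
  have h1 := hasDerivAt_pow i v
  have h2 := ((hasDerivAt_id v).const_sub 1).pow k
  have h := h1.mul h2
  refine h.congr_deriv ?_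
  simp [mon1]
  ring

lemma mon1_deriv (i k : ℕ) (v : ℝ) : HasDerivAt (mon1 i k) (mon2 i k v) v := by
  have h := ((mon0_deriv (i-1) k v).const_mul (i:ℝ)).sub ((mon0_deriv i (k-1) v).const_mul (k:ℝ))
  have e : mon1 i k = fun x => (i:ℝ) * mon0 (i-1) k x - (k:ℝ) * mon0 i (k-1) x := by
    funext x
    simp only [mon1, mon0]
    ring
  rw [e]
  exact h

lemma mon_ode (β : ℝ) (i k n : ℕ) (h : i + k = n) (v : ℝ) :
    v * (1 - v) * mon2 i k v + (β + 1) * (1 - 2 * v) * mon1 i k v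
      + n * (n + 2 * β + 1) * mon0 i k v
    = i * (i + β) * (v ^ (i-1) * (1 - v) ^ k) + k * (k + β) * (v ^ i * (1 - v) ^ (k-1)) := by
  subst h
  rcases i with _ | _ | i <;> rcases k with _ | _ | k <;>
    simp [mon0, mon1, mon2] <;> ring

noncomputable def dC (β : ℝ) (n m : ℕ) : ℝ :=
  (-1 : ℝ) ^ (n - m) * (n.choose m) *
      (Real.Gamma (β + n + 1) / Real.Gamma (β + m + 1)) *
      (Real.Gamma (β + 1) / Real.Gamma (β + ((n : ℝ) - m) + 1))

lemma dC_rec (β : ℝ) (hβ : -1 < β) (n m : ℕ) (h : m < n) :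
    ((m+1 : ℕ) : ℝ) * ((m+1 : ℕ) + β) * dC β n (m+1) + ((n - m : ℕ) : ℝ) * ((n - m : ℕ) + β) * dC β n m = 0 := by
  obtain ⟨j, rfl⟩ : ∃ j, n = m + 1 + j := ⟨n - (m+1), by omega⟩
  have e1 : m + 1 + j - m = j + 1 := by omega
  have e2 : m + 1 + j - (m + 1) = j := by omega
  have hc := Nat.choose_succ_right_eq (m+1+j) m
  rw [e1] at hc
  have hc' : ((m+1+j).choose (m+1) : ℝ) * (m+1) = (m+1+j).choose m * (j+1) := by exact_mod_cast hc
  unfold dC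
  rw [e1, e2]
  have g1 : Real.Gamma (β + ((m+1:ℕ):ℝ) + 1) = (β + m + 1) * Real.Gamma (β + m + 1) := by
    rw [← Real.Gamma_add_one (by have : (0:ℝ) ≤ m := by positivity
                                 linarith)]
    push_cast; ring_nf
  have g2 : Real.Gamma (β + (((m+1+j:ℕ):ℝ) - m) + 1) = (β + j + 1) * Real.Gamma (β + j + 1) := by
    rw [← Real.Gamma_add_one (by have : (0:ℝ) ≤ j := by positivity
                                 linarith)]
    push_cast; ring_nf
  have g3 : Real.Gamma (β + (((m+1+j:ℕ):ℝ) - (m+1:ℕ)) + 1) = Real.Gamma (β + j + 1) := by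
    push_cast; ring_nf
  rw [g1, g2, g3]
  have p1 : (0:ℝ) < β + m + 1 := by have : (0:ℝ) ≤ m := by positivity
                                    linarith
  have p2 : (0:ℝ) < β + j + 1 := by have : (0:ℝ) ≤ j := by positivity
                                    linarith
  have q1 := Real.Gamma_pos_of_pos p1
  have q2 := Real.Gamma_pos_of_pos p2
  generalize Real.Gamma (β + m + 1) = x at *
  generalize Real.Gamma (β + j + 1) = y at *
  generalize Real.Gamma (β + (m+1+j:ℕ) + 1) = z at *
  generalize Real.Gamma (β + 1) = w at *
  generalize ((m+1+j).choose m : ℝ) = c at *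
  generalize ((m+1+j).choose (m+1) : ℝ) = c' at *
  rw [pow_succ]
  push_cast
  have k1 : (m + 1 + β : ℝ) = β + m + 1 := by ring
  have k2 : (j + 1 + β : ℝ) = β + j + 1 := by ring
  rw [k1, k2]
  field_simp
  linear_combination (z * w * (-1)^j) * hc'

noncomputable def f0 (β : ℝ) (n : ℕ) (v : ℝ) : ℝ := ∑ m ∈ Finset.range (n+1), dC β n m * mon0 m (n-m) v
noncomputable def f1 (β : ℝ) (n : ℕ) (v : ℝ) : ℝ := ∑ m ∈ Finset.range (n+1), dC β n m * mon1 m (n-m) v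
noncomputable def f2 (β : ℝ) (n : ℕ) (v : ℝ) : ℝ := ∑ m ∈ Finset.range (n+1), dC β n m * mon2 m (n-m) v

lemma f0_deriv (β : ℝ) (n : ℕ) (v : ℝ) : HasDerivAt (f0 β n) (f1 β n v) v :=
  HasDerivAt.fun_sum fun m _ => (mon0_deriv m (n-m) v).const_mul _
lemma f1_deriv (β : ℝ) (n : ℕ) (v : ℝ) : HasDerivAt (f1 β n) (f2 β n v) v :=
  HasDerivAt.fun_sum fun m _ => (mon1_deriv m (n-m) v).const_mul _

lemma f_ode (β : ℝ) (hβ : -1 < β) (n : ℕ) (v : ℝ) :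
    v * (1 - v) * f2 β n v + (β + 1) * (1 - 2 * v) * f1 β n v
      + n * (n + 2 * β + 1) * f0 β n v = 0 := by
  unfold f0 f1 f2
  rw [Finset.mul_sum, Finset.mul_sum, Finset.mul_sum, ← Finset.sum_add_distrib, ← Finset.sum_add_distrib]
  have : ∀ m ∈ Finset.range (n+1), 
      v * (1 - v) * (dC β n m * mon2 m (n - m) v) + (β + 1) * (1 - 2 * v) * (dC β n m * mon1 m (n - m) v)
      + n * (n + 2 * β + 1) * (dC β n m * mon0 m (n - m) v) = 
      dC β n m * (m * (m + β) * (v ^ (m-1) * (1 - v) ^ (n-m)))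
      + dC β n m * ((n-m:ℕ) * ((n-m:ℕ) + β) * (v ^ m * (1 - v) ^ (n-m-1))) := by
    intro m hm
    have hm' := Finset.mem_range.1 hm
    have := mon_ode β m (n-m) n (by omega) v
    linear_combination (dC β n m) * this
  rw [Finset.sum_congr rfl this, Finset.sum_add_distrib, Finset.sum_range_succ', Finset.sum_range_succ (n := n)]
  simp only [Nat.sub_self, Nat.cast_zero, zero_mul, mul_zero, add_zero]
  rw [← Finset.sum_add_distrib]
  apply Finset.sum_eq_zero
  intro m hm
  have hm' := Finset.mem_range.1 hm
  have := dC_rec β hβ n m hm'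
  rw [show m + 1 - 1 = m by omega, show n - (m+1) = n - m - 1 by omega]
  linear_combination (v^m * (1-v)^(n-m-1)) * this

lemma f0_one (β : ℝ) (hβ : -1 < β) (n : ℕ) : f0 β n 1 = 1 := by
  unfold f0
  rw [Finset.sum_range_succ, Finset.sum_eq_zero]
  · have h1 := (Real.Gamma_pos_of_pos (show 0 < β + 1 by linarith)).ne'
    have h2 := (Real.Gamma_pos_of_pos (show 0 < β + n + 1 by
      have : (0:ℝ) ≤ n := by positivity
      linarith)).ne'
    simp [dC, mon0, h1, h2]
  · intro m hm
    have hm' := Finset.mem_range.1 hm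
    simp [mon0]
    right; omega

lemma f0_zero (β : ℝ) (hβ : -1 < β) (n : ℕ) : f0 β n 0 ^ 2 = 1 := by
  unfold f0
  rw [Finset.sum_range_succ', Finset.sum_eq_zero]
  · have h1 := (Real.Gamma_pos_of_pos (show 0 < β + 1 by linarith)).ne'
    have h2 := (Real.Gamma_pos_of_pos (show 0 < β + n + 1 by
      have : (0:ℝ) ≤ n := by positivity
      linarith)).ne'
    have e : (-1:ℝ) ^ n * (Real.Gamma (β + n + 1) / Real.Gamma (β + 1)) *
        (Real.Gamma (β + 1) / Real.Gamma (β + n + 1)) = (-1) ^ n := by field_simp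
    have e2 := neg_one_pow_eq_or ℝ n
    simp [dC, mon0]
    rw [e]
    exact e2
  · intro m hm
    simp [mon0]

lemma f0_bound (β : ℝ) (hβ : -(1/2) ≤ β) (n : ℕ) (hn : 1 ≤ n) (v : ℝ) (hv : 0 ≤ v) (hv1 : v ≤ 1) :
    |f0 β n v| ≤ 1 := by
  have hn' : (1:ℝ) ≤ n := by exact_mod_cast hn
  set N : ℝ := n * (n + 2 * β + 1) with hN
  have hNpos : 0 < N := by apply mul_pos <;> linarith
  let E : ℝ → ℝ := fun v => f0 β n v ^ 2 + v * (1 - v) * f1 β n v ^ 2 / N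
  have hE : ∀ v, HasDerivAt E ((2 * β + 1) * (2 * v - 1) * f1 β n v ^ 2 / N) v := by
    intro v
    have h0 := f0_deriv β n v
    have h1 := f1_deriv β n v
    have h := (h0.pow 2).add (((((hasDerivAt_id v).mul ((hasDerivAt_id v).const_sub 1)).mul (h1.pow 2))).div_const N)
    refine h.congr_deriv ?_
    have ode := f_ode β (by linarith) n v
    rw [← hN] at ode
    simp
    field_simp
    linear_combination 2 * f1 β n v * ode
  have hc : Continuous E := continuous_iff_continuousAt.2 fun v => (hE v).continuousAt
  have hEv : E v ≤ 1 := by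
    rcases le_total v (1/2) with h | h
    · have : AntitoneOn E (Set.Icc 0 (1/2)) := by
        apply antitoneOn_of_deriv_nonpos (convex_Icc _ _) hc.continuousOn
          (fun x _ => (hE x).differentiableAt.differentiableWithinAt)
        intro x hx
        rw [interior_Icc] at hx
        rw [(hE x).deriv]
        have : (2 * β + 1) * (1 - 2 * x) * f1 β n x ^ 2 / N ≥ 0 := by
          have := hx.2
          have : 0 ≤ 2 * β + 1 := by linarith
          have : 0 ≤ 1 - 2 * x := by linarith
          positivity
        linarith [show (2 * β + 1) * (2 * x - 1) * f1 β n x ^ 2 / N = - ((2 * β + 1) * (1 - 2 * x) * f1 β n x ^ 2 / N) by ring]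
      have := this (show (0:ℝ) ∈ Set.Icc 0 (1/2) by norm_num) ⟨hv, h⟩ hv
      refine this.trans ?_
      simp [E, f0_zero β (by linarith) n]
    · have : MonotoneOn E (Set.Icc (1/2) 1) := by
        apply monotoneOn_of_deriv_nonneg (convex_Icc _ _) hc.continuousOn
          (fun x _ => (hE x).differentiableAt.differentiableWithinAt)
        intro x hx
        rw [interior_Icc] at hx
        rw [(hE x).deriv]
        have : (2 * β + 1) * (2 * x - 1) * f1 β n x ^ 2 / N ≥ 0 := by
          have := hx.1
          have : 0 ≤ 2 * β + 1 := by linarith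
          have : 0 ≤ 2 * x - 1 := by linarith
          positivity
        linarith [show (2 * β + 1) * (2 * x - 1) * f1 β n x ^ 2 / N = ((2 * β + 1) * (2 * x - 1) * f1 β n x ^ 2 / N) by ring]
      have := this ⟨h, hv1⟩ (show (1:ℝ) ∈ Set.Icc (1/2) 1 by norm_num) hv1
      refine this.trans ?_
      simp [E, f0_one β (by linarith) n]
  rw [← sq_le_one_iff_abs_le_one]
  have : 0 ≤ v * (1 - v) * f1 β n v ^ 2 / N := by
    have : 0 ≤ 1 - v := by linarith
    positivity
  have e : E v = f0 β n v ^ 2 + v * (1 - v) * f1 β n v ^ 2 / N := rfl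
  linarith

lemma hom_bound_s13 (β : ℝ) (hβ : -(1/2) ≤ β) (n : ℕ) (hn : 1 ≤ n) (A B : ℝ) (hA : 0 ≤ A) (hB : 0 ≤ B) :
    |∑ m ∈ Finset.range (n+1), dC β n m * (A ^ m * B ^ (n-m))| ≤ (A + B) ^ n := by
  rcases eq_or_lt_of_le (add_nonneg hA hB) with h | h
  · have hA0 : A = 0 := by linarith
    have hB0 : B = 0 := by linarith
    subst hA0 hB0
    rw [Finset.sum_eq_zero]
    · simp
    · intro m hm
      have hm' := Finset.mem_range.1 hm
      rw [← pow_add, show m + (n - m) = n by omega, zero_pow (by omega), mul_zero]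
  · have hb := f0_bound β hβ n hn (A / (A+B)) (by positivity) (by rw [div_le_one h]; linarith)
    have : ∑ m ∈ Finset.range (n+1), dC β n m * (A ^ m * B ^ (n-m)) = (A+B)^n * f0 β n (A/(A+B)) := by
      unfold f0
      rw [Finset.mul_sum]
      apply Finset.sum_congr rfl
      intro m hm
      have hm' := Finset.mem_range.1 hm
      have e : 1 - A/(A+B) = B/(A+B) := by field_simp; ring
      rw [mon0, e, div_pow, div_pow]
      have e2 : (A+B)^n = (A+B)^m * (A+B)^(n-m) := by rw [← pow_add]; congr 1; omega
      rw [e2]; field_simp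
    rw [this, abs_mul, abs_of_pos (pow_pos h n)]
    exact mul_le_of_le_one_right (pow_pos h n).le hb

open MeasureTheory in
lemma beta_int_s13 (a b : ℝ) (ha : 0 < a) (hb : 0 < b) :
    IntegrableOn (fun x : ℝ => x ^ (a-1) * (1-x) ^ (b-1)) (Set.Ioc 0 1) ∧
    ∫ x in Set.Ioc (0:ℝ) 1, x ^ (a-1) * (1-x) ^ (b-1) =
      Real.Gamma a * Real.Gamma b / Real.Gamma (a + b) := by
  have hc := Complex.betaIntegral_convergent (u := a) (v := b) (by simpa) (by simpa)
  rw [intervalIntegrable_iff_integrableOn_Ioc_of_le (by simp)] at hc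
  have key : ∀ x ∈ Set.Ioc (0:ℝ) 1, RCLike.re ((x : ℂ) ^ ((a:ℂ) - 1) * (1 - (x : ℂ)) ^ ((b:ℂ) - 1)) =
      x ^ (a-1) * (1-x) ^ (b-1) := by
    rintro x ⟨hx1, hx2⟩
    norm_cast
    rw [← Complex.ofReal_cpow, ← Complex.ofReal_cpow, RCLike.re_to_complex,
        Complex.re_mul_ofReal, Complex.ofReal_re]
    all_goals linarith
  constructor
  · exact (integrableOn_congr_fun key measurableSet_Ioc).1 hc.re
  · have h := ProbabilityTheory.beta_eq_betaIntegralReal a b ha hb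
    rw [ProbabilityTheory.beta] at h
    rw [h, Complex.betaIntegral, intervalIntegral.integral_of_le (by norm_num),
      ← RCLike.re_to_complex, ← integral_re hc]
    exact (setIntegral_congr_fun measurableSet_Ioc key).symm

noncomputable def wt (α β s : ℝ) : ℝ := s ^ β * (1 - s) ^ (α - β - 1)

open MeasureTheory in
lemma wt_moment (α β : ℝ) (hβ : -1 < β) (hα : 0 < α - β) (k : ℕ) :
    IntegrableOn (fun s : ℝ => s ^ k * wt α β s) (Set.Ioc 0 1) ∧
    ∫ s in Set.Ioc (0:ℝ) 1, s ^ k * wt α β s =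
      Real.Gamma (β + k + 1) * Real.Gamma (α - β) / Real.Gamma (α + k + 1) := by
  have hk : (0:ℝ) ≤ k := by positivity
  have h := beta_int_s13 (β + k + 1) (α - β) (by linarith) hα
  rw [show β + k + 1 + (α - β) = α + k + 1 by ring] at h
  have key : ∀ x ∈ Set.Ioc (0:ℝ) 1, x ^ (β + k + 1 - 1) * (1 - x) ^ (α - β - 1) = x ^ k * wt α β x := by
    rintro x ⟨hx1, hx2⟩
    rw [wt, show β + k + 1 - 1 = β + k by ring, Real.rpow_add hx1, Real.rpow_natCast]
    ring
  exact ⟨(integrableOn_congr_fun key measurableSet_Ioc).1 h.1,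
    by rw [← h.2]; exact (setIntegral_congr_fun measurableSet_Ioc key).symm⟩

open MeasureTheory in
lemma rep (α β : ℝ) (hβ : -1 < β) (hα : 0 < α - β) (n : ℕ) (θ : ℝ) :
    IntegrableOn (fun s : ℝ => (∑ m ∈ Finset.range (n+1), dC β n m *
        ((Real.cos θ ^ 2) ^ m * (s * Real.sin θ ^ 2) ^ (n-m))) * wt α β s) (Set.Ioc 0 1) ∧
    pJacobiCos α β n θ = Real.Gamma (α + 1) / (Real.Gamma (α - β) * Real.Gamma (β + 1)) *
      ∫ s in Set.Ioc (0:ℝ) 1, (∑ m ∈ Finset.range (n+1), dC β n m *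
        ((Real.cos θ ^ 2) ^ m * (s * Real.sin θ ^ 2) ^ (n-m))) * wt α β s := by
  have e : (fun s : ℝ => (∑ m ∈ Finset.range (n+1), dC β n m *
        ((Real.cos θ ^ 2) ^ m * (s * Real.sin θ ^ 2) ^ (n-m))) * wt α β s) =
      fun s => ∑ m ∈ Finset.range (n+1), (dC β n m *
        ((Real.cos θ ^ 2) ^ m * (Real.sin θ ^ 2) ^ (n-m))) * (s ^ (n-m) * wt α β s) := by
    funext s
    rw [Finset.sum_mul]
    refine Finset.sum_congr rfl fun m _ => ?_
    rw [mul_pow]; ring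
  rw [e]
  have hi : ∀ m ∈ Finset.range (n+1), IntegrableOn (fun s : ℝ => (dC β n m *
        ((Real.cos θ ^ 2) ^ m * (Real.sin θ ^ 2) ^ (n-m))) * (s ^ (n-m) * wt α β s)) (Set.Ioc 0 1) :=
    fun m _ => (wt_moment α β hβ hα (n-m)).1.const_mul _
  refine ⟨integrable_finsetSum _ hi, ?_⟩
  rw [integral_finsetSum _ hi, Finset.mul_sum, pJacobiCos]
  refine Finset.sum_congr rfl fun m hm => ?_
  have hm' : m ≤ n := Nat.lt_succ_iff.1 (Finset.mem_range.1 hm)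
  rw [integral_const_mul, (wt_moment α β hβ hα (n-m)).2, dC, Nat.cast_sub hm']
  have hmn : (m:ℝ) ≤ n := by exact_mod_cast hm'
  have g1 := (Real.Gamma_pos_of_pos hα).ne'
  have g2 := (Real.Gamma_pos_of_pos (show 0 < β + 1 by linarith)).ne'
  have g3 := (Real.Gamma_pos_of_pos (show 0 < β + ((n:ℝ) - m) + 1 by linarith)).ne'
  field_simp

theorem jacobi_bound_two (α β : ℝ) (hβ : 0 ≤ β ∨ β = -(1/2))
    (n : ℕ) (hn : 1 ≤ n) (θ₀ : ℝ) (hθ₀ : 0 < θ₀) (hθ₀' : θ₀ < Real.pi / 2)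
    (hα : (n : ℝ) * Real.tan θ₀ ^ 2 < α - β - 1) :
    ∀ θ ∈ Set.Icc θ₀ (Real.pi / 2),
      |pJacobiCos α β n θ| ≤
        Real.Gamma (α + 1) / Real.Gamma (α - β) *
          Real.cos θ₀ ^ (2 * n) /
            (α - β - 1 - (n : ℝ) * Real.tan θ₀ ^ 2) ^ (β + 1) := by
  intro θ hθ
  have hβ2 : -(1/2) ≤ β := by rcases hβ with h | h <;> linarith
  have hβ1 : 0 < β + 1 := by linarith
  have hnt : 0 ≤ (n : ℝ) * Real.tan θ₀ ^ 2 := by positivity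
  set r := α - β - 1 - (n : ℝ) * Real.tan θ₀ ^ 2 with hr
  have hrpos : 0 < r := by linarith
  obtain ⟨hi, hrep⟩ := rep α β (by linarith) (by linarith) n θ
  have hc0 : 0 < Real.cos θ₀ := Real.cos_pos_of_mem_Ioo ⟨by linarith, hθ₀'⟩
  have hcle : Real.cos θ ^ 2 ≤ Real.cos θ₀ ^ 2 := by
    have h1 : Real.cos θ ≤ Real.cos θ₀ :=
      Real.cos_le_cos_of_nonneg_of_le_pi hθ₀.le (by linarith [hθ.2, Real.pi_pos]) hθ.1
    have h2 : 0 ≤ Real.cos θ := Real.cos_nonneg_of_mem_Icc ⟨by linarith [hθ.1], hθ.2⟩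
    gcongr
  have htan : Real.cos θ₀ ^ 2 * Real.tan θ₀ ^ 2 = Real.sin θ₀ ^ 2 := by
    rw [Real.tan_eq_sin_div_cos]; field_simp
  have gint := Real.integral_rpow_mul_exp_neg_mul_Ioi hβ1 hrpos
  rw [show β + 1 - 1 = β by ring] at gint
  have gi : MeasureTheory.IntegrableOn (fun s : ℝ => s ^ β * Real.exp (-(r * s))) (Set.Ioi 0) := by
    have := integrableOn_rpow_mul_exp_neg_mul_rpow (p := 1) (s := β) (b := r) (by linarith) one_pos hrpos
    simpa using this
  have hbd : |∫ s in Set.Ioc (0:ℝ) 1, (∑ m ∈ Finset.range (n+1), dC β n m *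
        ((Real.cos θ ^ 2) ^ m * (s * Real.sin θ ^ 2) ^ (n-m))) * wt α β s| ≤
      Real.cos θ₀ ^ (2 * n) * ((1 / r) ^ (β + 1) * Real.Gamma (β + 1)) := by
    rw [← Real.norm_eq_abs, ← gint]
    refine (MeasureTheory.norm_integral_le_of_norm_le
      ((gi.mono_set Set.Ioc_subset_Ioi_self).const_mul (Real.cos θ₀ ^ (2 * n))) ?_).trans ?_
    · refine MeasureTheory.ae_restrict_of_forall_mem measurableSet_Ioc ?_
      rintro s ⟨hs0, hs1⟩
      have hw : 0 ≤ wt α β s :=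
        mul_nonneg (Real.rpow_nonneg hs0.le _) (Real.rpow_nonneg (by linarith) _)
      rw [Real.norm_eq_abs, abs_mul, abs_of_nonneg hw]
      have h1 := hom_bound_s13 β hβ2 n hn (Real.cos θ ^ 2) (s * Real.sin θ ^ 2) (by positivity) (by positivity)
      have h2 : Real.cos θ ^ 2 + s * Real.sin θ ^ 2 ≤ Real.cos θ₀ ^ 2 * Real.exp (s * Real.tan θ₀ ^ 2) := by
        have a1 := Real.sin_sq_add_cos_sq θ
        have a2 := Real.sin_sq_add_cos_sq θ₀
        have a3 := Real.add_one_le_exp (s * Real.tan θ₀ ^ 2)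
        calc Real.cos θ ^ 2 + s * Real.sin θ ^ 2 = s + (1 - s) * Real.cos θ ^ 2 := by
              linear_combination s * a1
          _ ≤ s + (1 - s) * Real.cos θ₀ ^ 2 := by
              have : 0 ≤ 1 - s := by linarith
              gcongr
          _ = Real.cos θ₀ ^ 2 * (s * Real.tan θ₀ ^ 2 + 1) := by
              linear_combination (-s) * a2 - s * htan
          _ ≤ _ := by gcongr
      have h3 : (1 - s) ^ (α - β - 1) ≤ Real.exp (-((α - β - 1) * s)) := by
        have : 1 - s ≤ Real.exp (-s) := by linarith [Real.add_one_le_exp (-s)]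
        calc (1 - s) ^ (α - β - 1) ≤ (Real.exp (-s)) ^ (α - β - 1) :=
              Real.rpow_le_rpow (by linarith) this (by linarith)
          _ = _ := by rw [← Real.exp_mul]; ring_nf
      calc _ ≤ (Real.cos θ₀ ^ 2 * Real.exp (s * Real.tan θ₀ ^ 2)) ^ n *
            (s ^ β * Real.exp (-((α - β - 1) * s))) := by
            refine mul_le_mul (h1.trans (pow_le_pow_left₀ (by positivity) h2 n)) ?_ hw (by positivity)
            exact mul_le_mul_of_nonneg_left h3 (Real.rpow_nonneg hs0.le _)
        _ = _ := by
            rw [mul_pow, ← pow_mul, ← Real.exp_nat_mul]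
            have : Real.exp (-(r * s)) = Real.exp (n * (s * Real.tan θ₀ ^ 2)) * Real.exp (-((α - β - 1) * s)) := by
              rw [← Real.exp_add, hr]; congr 1; ring
            rw [this]; ring
    · rw [MeasureTheory.integral_const_mul]
      refine mul_le_mul_of_nonneg_left ?_ (by positivity)
      refine MeasureTheory.setIntegral_mono_set gi ?_ (Set.Ioc_subset_Ioi_self.eventuallyLE)
      refine MeasureTheory.ae_restrict_of_forall_mem measurableSet_Ioi ?_
      intro s hs
      exact mul_nonneg (Real.rpow_nonneg (le_of_lt hs) _) (Real.exp_pos _).le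
  have G1 := Real.Gamma_pos_of_pos (show 0 < α + 1 by linarith)
  have G2 := Real.Gamma_pos_of_pos (show 0 < α - β by linarith)
  have G3 := Real.Gamma_pos_of_pos hβ1
  rw [hrep, abs_mul, abs_of_pos (by positivity)]
  refine (mul_le_mul_of_nonneg_left hbd (by positivity)).trans (le_of_eq ?_)
  have hp : 0 < r ^ (β + 1) := Real.rpow_pos_of_pos hrpos _
  rw [Real.div_rpow zero_le_one hrpos.le, Real.one_rpow]
  field_simp
end

section
/- Let s > 0. There is no sequence (a_n)_{n≥0} of nonnegative real numbers such that for every θ ∈ (0, π/2] the series Σ_{n=0}^∞ a_n (cos θ)^{2n} converges with sum θ^{-s}. -/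
theorem no_nonneg_power_series_for_geodesic_riesz (s : ℝ) (hs : 0 < s) :
    ¬ ∃ a : ℕ → ℝ, (∀ n, 0 ≤ a n) ∧
      ∀ θ ∈ Set.Ioc (0 : ℝ) (Real.pi / 2),
        HasSum (fun n => a n * Real.cos θ ^ (2 * n)) (θ ^ (-s)) := by
  rintro ⟨a, ha, h⟩
  have hpi : (3 : ℝ) < Real.pi := Real.pi_gt_three
  have hy : 0 < Real.cos 1 := Real.cos_pos_of_mem_Ioo ⟨by linarith, by linarith⟩
  have h1 := h 1 ⟨by norm_num, by linarith⟩
  have h0 : a 0 = (Real.pi / 2) ^ (-s) := by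
    have h2 := h (Real.pi / 2) ⟨by linarith, le_rfl⟩
    have h3 : HasSum (fun n => a n * Real.cos (Real.pi / 2) ^ (2 * n)) (a 0) := by
      have := hasSum_single (f := fun n => a n * Real.cos (Real.pi / 2) ^ (2 * n)) 0
        (by intro n hn; simp [hn])
      simpa using this
    exact h3.unique h2
  -- a maximum of `g` on the left of `π / 2`
  have key : ∀ θ ∈ Set.Ioo (1 : ℝ) (Real.pi / 2),
      θ ^ (-s) - Real.cos θ ^ 2 / Real.cos 1 ^ 2 ≤ (Real.pi / 2) ^ (-s) := by
    rintro θ ⟨hθ1, hθ2⟩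
    have hθ := h θ ⟨by linarith, hθ2.le⟩
    have hc0 : 0 ≤ Real.cos θ := Real.cos_nonneg_of_mem_Icc ⟨by linarith, hθ2.le⟩
    have hc1 : Real.cos θ ≤ Real.cos 1 :=
      Real.cos_le_cos_of_nonneg_of_le_pi (by norm_num) (by linarith) hθ1.le
    have hs2 := (hasSum_ite_eq (0 : ℕ) (a 0)).add
      (h1.mul_left (Real.cos θ ^ 2 / Real.cos 1 ^ 2))
    have hle := hasSum_le (fun n => ?_) hθ hs2
    · rw [Real.one_rpow, h0] at hle
      linarith
    · rcases n with _ | n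
      · have := ha 0
        simp only [mul_zero, pow_zero, mul_one, if_true]
        have : 0 ≤ Real.cos θ ^ 2 / Real.cos 1 ^ 2 * a 0 := by positivity
        linarith
      · have e : Real.cos θ ^ 2 / Real.cos 1 ^ 2 * (a (n + 1) * Real.cos 1 ^ (2 * (n + 1)))
            = a (n + 1) * (Real.cos θ ^ 2 * Real.cos 1 ^ (2 * n)) := by
          field_simp
          ring
        have e2 : Real.cos θ ^ (2 * (n + 1)) = Real.cos θ ^ 2 * Real.cos θ ^ (2 * n) := by ring
        simp only [e, e2, Nat.succ_ne_zero, if_false, zero_add]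
        have := ha (n + 1)
        gcongr
  have hd : HasDerivAt (fun θ : ℝ => θ ^ (-s) - Real.cos θ ^ 2 / Real.cos 1 ^ 2)
      (-s * (Real.pi / 2) ^ (-s - 1)) (Real.pi / 2) := by
    have d1 := Real.hasDerivAt_rpow_const (x := Real.pi / 2) (p := -s)
      (Or.inl (by positivity))
    have d2 := ((Real.hasDerivAt_cos (Real.pi / 2)).pow 2).div_const (Real.cos 1 ^ 2)
    refine (d1.sub d2).congr_deriv ?_
    simp
  have hneg : -s * (Real.pi / 2) ^ (-s - 1) < 0 := by
    have : 0 < s * (Real.pi / 2) ^ (-s - 1) := by positivity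
    linarith
  have ht := (hasDerivAt_iff_tendsto_slope_left_right.1 hd).1
  have ev := ht.eventually (gt_mem_nhds hneg)
  have ev2 : ∀ᶠ θ in nhdsWithin (Real.pi / 2) (Set.Iio (Real.pi / 2)),
      θ ∈ Set.Ioo (1 : ℝ) (Real.pi / 2) := Ioo_mem_nhdsLT (by linarith)
  obtain ⟨θ, hθ, hm⟩ := (ev.and ev2).exists
  have hk := key θ hm
  rw [slope_def_field] at hθ
  have : 0 ≤ (θ ^ (-s) - Real.cos θ ^ 2 / Real.cos 1 ^ 2 -
      ((Real.pi / 2) ^ (-s) - Real.cos (Real.pi / 2) ^ 2 / Real.cos 1 ^ 2)) /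
      (θ - Real.pi / 2) := by
    apply div_nonneg_of_nonpos
    · simp only [Real.cos_pi_div_two]
      norm_num
      linarith
    · linarith [hm.2]
  linarith
end
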